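/- Burton–Keane uniqueness of the infinite cluster: for every dimension d ≥ 1 and every p ∈ (0,1) with θ(p) > 0, ℙ_p-almost surely there exists exactly one infinite open cluster, i.e. ℙ_p[the subgraph of open edges has exactly one infinite connected component] = 1. -/

import Mathlib

open MeasureTheory

namespace Perc

/-- Vertices of `ℤ^d`. -/
abbrev Vertex (d : ℕ) := Fin d → ℤ

/-- Nearest-neighbour adjacency in `ℤ^d`: `‖x − y‖₁ = 1`. -/
def adj {d : ℕ} (x y : Vertex d) : Prop :=
  (∑ i, (x i - y i).natAbs) = 1

/-- The unordered pair `e` is a nearest-neighbour edge of `ℤ^d`. -/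
def IsEdge {d : ℕ} (e : Sym2 (Vertex d)) : Prop :=
  ∃ x y : Vertex d, adj x y ∧ e = s(x, y)

/-- The set `E` of nearest-neighbour edges of `ℤ^d`. -/
abbrev Edge (d : ℕ) := {e : Sym2 (Vertex d) // IsEdge e}

/-- Percolation configurations `ω ∈ {0,1}^E`. -/
abbrev Config (d : ℕ) := Edge d → Bool

/-- One step along an open edge of `ω`. -/
def step {d : ℕ} (ω : Config d) (x y : Vertex d) : Prop :=
  ∃ h : adj x y, ω ⟨s(x, y), x, y, h, rfl⟩ = true

/-- `x` and `y` are joined by a path of open edges. -/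
def Conn {d : ℕ} (ω : Config d) : Vertex d → Vertex d → Prop :=
  Relation.ReflTransGen (step ω)

/-- The open cluster of `x` in `ω`. -/
def cluster {d : ℕ} (ω : Config d) (x : Vertex d) : Set (Vertex d) :=
  {y | Conn ω x y}

/-- The box `Λ_n = {−n, …, n}^d`. -/
def box (d n : ℕ) : Set (Vertex d) := {x | ∀ i, |x i| ≤ (n : ℤ)}

/-- `∂Λ_n`: vertices of `Λ_n` having a nearest neighbour outside `Λ_n`. -/
def boxBoundary (d n : ℕ) : Set (Vertex d) :=
  {x | x ∈ box d n ∧ ∃ y, adj x y ∧ y ∉ box d n}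

/-- The origin of `ℤ^d`. -/
def origin (d : ℕ) : Vertex d := fun _ => 0

/-- The event `{0 ↔ ∂Λ_n}`. -/
def ZeroToBoundary (d n : ℕ) : Set (Config d) :=
  {ω | ∃ y ∈ boxBoundary d n, Conn ω (origin d) y}

/-- The event `{0 ↔ ∞}` that the open cluster of the origin is infinite. -/
def ZeroToInfinity (d : ℕ) : Set (Config d) :=
  {ω | (cluster ω (origin d)).Infinite}

/-- `μ` is the law of i.i.d. Bernoulli(p) edge variables: it is a probability measure on
`{0,1}^E` under which every finite cylinder has the corresponding product probability. -/
def IsBernoulli (d : ℕ) (p : ℝ) (μ : Measure (Config d)) : Prop :=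
  IsProbabilityMeasure μ ∧
    ∀ (s : Finset (Edge d)) (f : Edge d → Bool),
      μ {ω : Config d | ∀ e ∈ s, ω e = f e} =
        ENNReal.ofReal (∏ e ∈ s, if f e then p else 1 - p)

/-! The proof compares two ways of counting open edges. Fix a box and let `X` be the set of its
closed edges joining two distinct open clusters of the box that both reach the boundary. The open
indicator minus `p`, summed over the edges touching a cluster and then over all the clusters that
reach the boundary, counts the edges of `X` twice and every other explored edge once, so the result
is the sum over all explored edges minus `p * #X`. The explored edges form a stopping set, hence
their sum has mean zero. Each single cluster is also a stopping set, and exponential tilting shows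
that a deviation linear in the number of its edges is exponentially unlikely; as the number of
clusters is at most the size of the boundary, `p * E[#X]` is negligible compared to the volume.
By translation invariance two given neighbours therefore almost surely do not lie in distinct
infinite clusters. This remains true after finitely many edges have been opened, and opening a path
of `ℤ^d` between two distinct infinite clusters makes them meet at such a pair of neighbours. -/

open ProbabilityTheory Filter

section ProductMeasure

variable {ι : Type*} {X : ι → Type*} [∀ i, MeasurableSpace (X i)]

lemma measurable_cylinderEvents_compl_piecewise [DecidableEq ι] (s : Finset ι) (f : ∀ i, X i) :
    Measurable[cylinderEvents (s : Set ι)ᶜ] (fun ω : ∀ i, X i => s.piecewise f ω) := by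
  refine @measurable_pi_lambda _ _ _ (_) _ _ fun i => ?_
  by_cases hi : i ∈ s
  · simp only [s.piecewise_eq_of_mem _ _ hi, measurable_const]
  · simp only [s.piecewise_eq_of_notMem _ _ hi]
    exact measurable_cylinderEvent_apply (by simpa using hi)

variable {P : ∀ i, Measure (X i)} [∀ i, IsProbabilityMeasure (P i)]

lemma iIndep_comap_eval_infinitePi :
    iIndep (fun i => MeasurableSpace.comap (fun ω => ω i) inferInstance)
      (Measure.infinitePi P) :=
  iIndepFun_infinitePi (X := fun _ => id) fun _ => measurable_id

lemma indep_cylinderEvents_infinitePi {S T : Set ι} (hST : Disjoint S T) :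
    Indep (cylinderEvents S) (cylinderEvents T) (Measure.infinitePi P) := by
  have h := indep_iSup_of_disjoint (fun i => (measurable_pi_apply i).comap_le)
    (iIndep_comap_eval_infinitePi (P := P)) hST
  exact h

-- Overwriting `s` by `f` is conditioning on the positive-probability event `ω = f on s`.
lemma quasiMeasurePreserving_piecewise [DecidableEq ι] [∀ i, MeasurableSingletonClass (X i)]
    (s : Finset ι) (f : ∀ i, X i) (hf : ∀ i ∈ s, P i {f i} ≠ 0) :
    Measure.QuasiMeasurePreserving (fun ω => s.piecewise f ω)
      (Measure.infinitePi P) (Measure.infinitePi P) := by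
  have hmeas := measurable_cylinderEvents_compl_piecewise s f
  have hmeas' : Measurable fun ω => s.piecewise f ω := hmeas.mono cylinderEvents_le_pi le_rfl
  refine ⟨hmeas', .mk fun N hN hPN => ?_⟩
  rw [Measure.map_apply hmeas' hN]
  set C : Set (∀ i, X i) := (s : Set ι).pi fun i => {f i} with hC
  have hC_meas : MeasurableSet[cylinderEvents (s : Set ι)] C := by
    rw [hC, Set.pi_def]
    exact Finset.measurableSet_biInter _ fun i hi =>
      measurable_cylinderEvent_apply hi (measurableSet_singleton (f i))
  have hC_ne : Measure.infinitePi P C ≠ 0 := by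
    rw [hC, Measure.infinitePi_pi _ fun i _ => measurableSet_singleton _]
    exact Finset.prod_ne_zero_iff.2 hf
  have hsub : C ∩ (fun ω => s.piecewise f ω) ⁻¹' N ⊆ N := by
    rintro ω ⟨hω, hωN⟩
    have hfix : s.piecewise f ω = ω :=
      (s.piecewise_congr (fun i hi => (hω i hi).symm) fun _ _ => rfl).trans (s.piecewise_same ω)
    rwa [Set.mem_preimage, hfix] at hωN
  have hmul := (Indep_iff _ _ _).1 (indep_cylinderEvents_infinitePi (P := P) disjoint_compl_right)
    C _ hC_meas (hmeas hN)
  rw [measure_mono_null hsub hPN] at hmul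
  exact (mul_eq_zero.1 hmul.symm).resolve_left hC_ne

lemma infinitePi_eq_zero_or_one_of_update_mem [DecidableEq ι] {A : Set (∀ i, X i)}
    (hA : MeasurableSet A) (hupdate : ∀ ω ∈ A, ∀ i x, Function.update ω i x ∈ A) :
    Measure.infinitePi P A = 0 ∨ Measure.infinitePi P A = 1 := by
  let f (i : ι) : X i := (P i).nonempty_of_neZero.some
  have hpiecewise (ω) (hω : ω ∈ A) (g : ∀ i, X i) (s : Finset ι) : s.piecewise g ω ∈ A := by
    induction s using Finset.induction_on with
    | empty => simpa using hω
    | insert i s _ ih => rw [s.piecewise_insert]; exact hupdate _ ih i _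
  have hpre (s : Finset ι) : (fun ω => s.piecewise f ω) ⁻¹' A = A := by
    ext ω
    refine ⟨fun h => ?_, fun h => hpiecewise ω h f s⟩
    simpa [s.piecewise_idem_right, s.piecewise_same] using hpiecewise _ h ω s
  refine measure_zero_or_one_of_measurableSet_limsup (f := cofinite) (p := Set.Finite)
    (ns := fun s : Finset ι => (s : Set ι)) (fun i => (measurable_pi_apply i).comap_le)
    iIndep_comap_eval_infinitePi (fun t ht => ht.compl_mem_cofinite)
    (fun s t => ⟨s ∪ t, by simp, by simp⟩) (fun s => s.finite_toSet)
    (fun i => ⟨{i}, by simp⟩) ?_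
  rw [hasBasis_cofinite.limsup_eq_iInf_iSup]
  simp only [MeasurableSpace.measurableSet_iInf]
  intro t ht
  have := measurable_cylinderEvents_compl_piecewise ht.toFinset f hA
  rwa [hpre, ht.coe_toFinset] at this

lemma eq_infinitePi_of_pi_singleton [∀ i, Countable (X i)] [∀ i, MeasurableSingletonClass (X i)]
    {μ : Measure (∀ i, X i)} (hμ : ∀ (s : Finset ι) (f : ∀ i, X i),
      μ ((s : Set ι).pi fun i => {f i}) = ∏ i ∈ s, P i {f i}) :
    μ = Measure.infinitePi P := by
  classical
  refine ((Measure.isProjectiveLimit_infinitePi P).unique fun s => ?_).symm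
  refine Measure.ext_of_singleton fun g => ?_
  let f (i : ι) : X i := if hi : i ∈ s then g ⟨i, hi⟩ else (P i).nonempty_of_neZero.some
  have hf : s.restrict f = g := by ext i; simp [f]
  have hpre : s.restrict ⁻¹' {s.restrict f} = (s : Set ι).pi fun i => {f i} := by
    ext ω
    simp [funext_iff, Set.mem_pi]
  rw [← hf, Measure.map_apply (s.measurable_restrict) (measurableSet_singleton _), hpre, hμ,
    Measure.pi_singleton]
  exact (Finset.prod_coe_sort s fun i => P i {f i}).symm

end ProductMeasure

section BondPercolation

/-- Bond percolation of parameter `p` on a set of edges `E`: the edges are open independently with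
probability `p`. -/
noncomputable abbrev bondPercolation (E : Type*) (p : unitInterval) : Measure (E → Bool) :=
  Measure.infinitePi fun _ => bernoulliMeasure true false p

lemma measurePreserving_comp_bondPercolation {E F : Type*} {f : F → E} (hf : f.Injective)
    (p : unitInterval) :
    MeasurePreserving (fun η i => η (f i)) (bondPercolation E p) (bondPercolation F p) :=
  ⟨by fun_prop, Measure.map_infinitePi_infinitePi_of_inj hf⟩

lemma integral_comp_bondPercolation {E F : Type*} [Finite F] {f : F → E} (hf : f.Injective)
    (p : unitInterval) (g : (F → Bool) → ℝ) :
    ∫ η, g (fun i => η (f i)) ∂bondPercolation E p = ∫ η, g η ∂bondPercolation F p := by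
  have h := measurePreserving_comp_bondPercolation hf p
  rw [← h.map_eq, integral_map h.aemeasurable Measurable.of_discrete.aestronglyMeasurable]

lemma bernoulliMeasure_bool_singleton (p : unitInterval) (b : Bool) :
    bernoulliMeasure true false p {b} = ENNReal.ofReal (if b then (p : ℝ) else 1 - p) := by
  rw [← ofReal_measureReal, bernoulliMeasure_real_apply p (measurableSet_singleton b)]
  cases b <;> simp

lemma IsBernoulli.eq_bondPercolation {d : ℕ} {p : unitInterval} {μ : Measure (Config d)}
    (hμ : IsBernoulli d p μ) :
    μ = bondPercolation (Edge d) p := by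
  refine eq_infinitePi_of_pi_singleton fun s f => ?_
  have hcyl : ((s : Set (Edge d)).pi fun e => {f e}) = {ω | ∀ e ∈ s, ω e = f e} := by
    ext ω
    simp
  rw [hcyl, hμ.2, ENNReal.ofReal_prod_of_nonneg]
  · exact Finset.prod_congr rfl fun e _ => (bernoulliMeasure_bool_singleton p (f e)).symm
  · intro e _
    split_ifs
    exacts [p.2.1, sub_nonneg.2 p.2.2]

end BondPercolation

section DependsOn

variable {ι : Type*} {X : ι → Type*}

lemma dependsOn_prod_eval (s : Finset ι) (g : ∀ i, X i → ℝ) :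
    DependsOn (fun ω : ∀ i, X i => ∏ i ∈ s, g i (ω i)) s :=
  fun _ _ h => Finset.prod_congr rfl fun i hi => by rw [h i hi]

variable [∀ i, MeasurableSpace (X i)] {P : ∀ i, Measure (X i)} [∀ i, IsProbabilityMeasure (P i)]

lemma measurable_cylinderEvents_of_dependsOn [Finite ι] [∀ i, Countable (X i)]
    [∀ i, DiscreteMeasurableSpace (X i)] {f : (∀ i, X i) → ℝ} {S : Set ι} (hf : DependsOn f S) :
    Measurable[cylinderEvents S] f := by
  obtain ⟨F, rfl⟩ := dependsOn_iff_exists_comp.1 hf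
  exact (Measurable.of_discrete (f := F)).comp (measurable_restrict_cylinderEvents S)

lemma integral_mul_eq_of_dependsOn [Finite ι] [∀ i, Countable (X i)]
    [∀ i, DiscreteMeasurableSpace (X i)] {f g : (∀ i, X i) → ℝ} {S T : Set ι}
    (hf : DependsOn f S) (hg : DependsOn g T) (hST : Disjoint S T) :
    ∫ ω, f ω * g ω ∂Measure.infinitePi P =
      (∫ ω, f ω ∂Measure.infinitePi P) * ∫ ω, g ω ∂Measure.infinitePi P := by
  have hindep : IndepFun f g (Measure.infinitePi P) :=
    (IndepFun_iff_Indep _ _ _).2 <| indep_of_indep_of_le (indep_cylinderEvents_infinitePi hST)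
      (measurable_cylinderEvents_of_dependsOn hf).comap_le
      (measurable_cylinderEvents_of_dependsOn hg).comap_le
  exact hindep.integral_fun_mul_eq_mul_integral
    Measurable.of_discrete.aestronglyMeasurable Measurable.of_discrete.aestronglyMeasurable

lemma integral_prod_eval_infinitePi [∀ i, Countable (X i)] [∀ i, DiscreteMeasurableSpace (X i)]
    (s : Finset ι) (g : ∀ i, X i → ℝ) :
    ∫ ω, ∏ i ∈ s, g i (ω i) ∂Measure.infinitePi P = ∏ i ∈ s, ∫ x, g i x ∂P i := by
  calc ∫ ω, ∏ i ∈ s, g i (ω i) ∂Measure.infinitePi P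
      = ∫ ω, ∏ i : s, g i (s.restrict ω i) ∂Measure.infinitePi P := by
        simp only [← Finset.prod_coe_sort s, Finset.restrict_def]
    _ = ∫ y, ∏ i : s, g i (y i) ∂Measure.pi fun i : s => P i :=
        integral_restrict_infinitePi (f := fun y => ∏ i : s, g i (y i)) P
          Measurable.of_discrete.aestronglyMeasurable
    _ = ∏ i ∈ s, ∫ x, g i x ∂P i := by
        rw [integral_fintype_prod_eq_prod (fun i : s => g i),
          Finset.prod_coe_sort s fun i => ∫ x, g i x ∂P i]

end DependsOn

section StoppingSet

variable {ι : Type*} {X : ι → Type*}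

/-- A random finite set of coordinates that can be explored by looking only at the coordinates it
contains: the value `T ω` is already determined by the restriction of `ω` to `T ω`. -/
def IsStoppingSet (T : (∀ i, X i) → Finset ι) : Prop :=
  ∀ ω ω', (∀ i ∈ T ω, ω i = ω' i) → T ω = T ω'

namespace IsStoppingSet

variable {T : (∀ i, X i) → Finset ι}

lemma dependsOn_eq (hT : IsStoppingSet T) (s : Finset ι) : DependsOn (fun ω => T ω = s) s := by
  intro ω ω' h
  refine propext ⟨?_, ?_⟩
  · rintro rfl
    exact (hT ω ω' h).symm
  · rintro rfl
    exact (hT ω' ω fun i hi => (h i hi).symm).symm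

lemma dependsOn_mem (hT : IsStoppingSet T) (i : ι) : DependsOn (fun ω => i ∈ T ω) {i}ᶜ := by
  have hmem (ω ω') (h : ∀ j ∈ ({i} : Set ι)ᶜ, ω j = ω' j) (hi : i ∈ T ω') : i ∈ T ω := by
    by_contra hi'
    rw [hT ω ω' fun j hj => h j (ne_of_mem_of_not_mem hj hi')] at hi'
    exact hi' hi
  exact fun ω ω' h => propext ⟨hmem ω' ω fun j hj => (h j hj).symm, hmem ω ω' h⟩

section Wald

variable [Finite ι] [∀ i, MeasurableSpace (X i)] [∀ i, Finite (X i)]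
  [∀ i, DiscreteMeasurableSpace (X i)] {P : ∀ i, Measure (X i)} [∀ i, IsProbabilityMeasure (P i)]

lemma integral_prod_eq_one (hT : IsStoppingSet T) {g : ∀ i, X i → ℝ}
    (hg : ∀ i, ∫ x, g i x ∂P i = 1) :
    ∫ ω, ∏ i ∈ T ω, g i (ω i) ∂Measure.infinitePi P = 1 := by
  classical
  cases nonempty_fintype ι
  let ind (s : Finset ι) (ω : ∀ i, X i) : ℝ := if T ω = s then 1 else 0
  have hind (f : (∀ i, X i) → Finset ι → ℝ) (ω) : f ω (T ω) = ∑ s, ind s ω * f ω s := by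
    simp [ind]
  have hone (s : Finset ι) : ∫ ω, ∏ i ∈ s, g i (ω i) ∂Measure.infinitePi P = 1 := by
    simp [integral_prod_eval_infinitePi, hg]
  have hsplit (s : Finset ι) :
      ∫ ω, ind s ω * ∏ i ∈ s, g i (ω i) ∂Measure.infinitePi P =
        ∫ ω, ind s ω * ∏ i, g i (ω i) ∂Measure.infinitePi P := by
    have hdep : DependsOn (fun ω => ind s ω * ∏ i ∈ s, g i (ω i)) s := fun ω ω' h => by
      have hind_eq : ind s ω = ind s ω' := by simp only [ind, hT.dependsOn_eq s h]
      exact congrArg₂ (· * ·) hind_eq (dependsOn_prod_eval s g h)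
    have hdisj : Disjoint (s : Set ι) (sᶜ : Finset ι) := by simpa using disjoint_compl_right
    have hmul := integral_mul_eq_of_dependsOn (P := P) hdep (dependsOn_prod_eval sᶜ g) hdisj
    rw [hone, mul_one] at hmul
    rw [← hmul]
    simp only [mul_assoc, Finset.prod_mul_prod_compl]
  rw [integral_congr_ae (.of_forall fun ω => hind (fun ω s => ∏ i ∈ s, g i (ω i)) ω),
    integral_finsetSum _ fun s _ => .of_finite]
  simp only [hsplit]
  rw [← integral_finsetSum _ fun s _ => .of_finite,
    ← integral_congr_ae (.of_forall fun ω => hind (fun ω _ => ∏ i, g i (ω i)) ω), hone]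

lemma integral_sum_eq_zero (hT : IsStoppingSet T) {f : ∀ i, X i → ℝ}
    (hf : ∀ i, ∫ x, f i x ∂P i = 0) :
    ∫ ω, ∑ i ∈ T ω, f i (ω i) ∂Measure.infinitePi P = 0 := by
  classical
  cases nonempty_fintype ι
  have hind (ω : ∀ i, X i) :
      ∑ i ∈ T ω, f i (ω i) = ∑ i, (if i ∈ T ω then 1 else 0) * f i (ω i) := by simp
  simp only [hind]
  rw [integral_finsetSum _ fun i _ => .of_finite]
  refine Finset.sum_eq_zero fun i _ => ?_
  have hdep : DependsOn (fun ω => if i ∈ T ω then (1 : ℝ) else 0) {i}ᶜ := fun ω ω' h => by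
    simp only [hT.dependsOn_mem i h]
  have hdep' : DependsOn (fun ω : ∀ i, X i => f i (ω i)) {i} := fun ω ω' h => by simp [h i rfl]
  rw [integral_mul_eq_of_dependsOn hdep hdep' disjoint_compl_left,
    show ∫ ω, f i (ω i) ∂Measure.infinitePi P = 0 by
      simpa [hf] using integral_prod_eval_infinitePi (P := P) {i} f, mul_zero]

lemma integral_prod_exp_le_one (hT : IsStoppingSet T) {f : ∀ i, X i → ℝ} {c : NNReal}
    (hf : ∀ i, HasSubgaussianMGF (f i) c (P i)) (t : ℝ) :
    ∫ ω, ∏ i ∈ T ω, Real.exp (t * f i (ω i) - c * t ^ 2 / 2) ∂Measure.infinitePi P ≤ 1 := by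
  have hmean (i : ι) : ∫ x, Real.exp (t * f i x - cgf (f i) (P i) t) ∂P i = 1 := by
    simp_rw [Real.exp_sub, integral_div, exp_cgf ((hf i).integrable_exp_mul t)]
    exact div_self (mgf_pos ((hf i).integrable_exp_mul t)).ne'
  rw [← hT.integral_prod_eq_one hmean]
  refine integral_mono .of_finite .of_finite fun ω => ?_
  dsimp only
  gcongr
  exact (hf _).cgf_le t

end Wald

end IsStoppingSet

end StoppingSet

section OpenGraph

variable {V E : Type*}

/-- The graph of open edges of the configuration `η`, where `ends e` are the endpoints of the
edge `e`. -/
def openGraph (ends : E → Sym2 V) (η : E → Bool) : SimpleGraph V :=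
  SimpleGraph.fromEdgeSet (ends '' {e | η e = true})

variable {ends : E → Sym2 V} {η η' : E → Bool} {B : Set V}

lemma openGraph_adj {u v : V} :
    (openGraph ends η).Adj u v ↔ (∃ e, η e = true ∧ ends e = s(u, v)) ∧ u ≠ v := by
  simp [openGraph]

open Classical in
/-- The open clusters containing a vertex of `B`. -/
noncomputable def clustersMeeting (ends : E → Sym2 V) (B : Finset V) (η : E → Bool) :
    Finset (openGraph ends η).ConnectedComponent :=
  B.image (openGraph ends η).connectedComponentMk

lemma mem_clustersMeeting {B : Finset V} {c : (openGraph ends η).ConnectedComponent} :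
    c ∈ clustersMeeting ends B η ↔ ∃ x ∈ B, (openGraph ends η).connectedComponentMk x = c := by
  simp [clustersMeeting]

variable [Fintype E]

open Classical in
/-- The edges revealed when the open clusters of the vertices of `B` are explored: those with an
endpoint connected to `B`. -/
noncomputable def exploredEdges (ends : E → Sym2 V) (B : Set V) (η : E → Bool) : Finset E :=
  {e | ∃ u ∈ ends e, ∃ x ∈ B, (openGraph ends η).Reachable x u}

lemma mem_exploredEdges {e : E} : e ∈ exploredEdges ends B η ↔
    ∃ u ∈ ends e, ∃ x ∈ B, (openGraph ends η).Reachable x u := by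
  simp [exploredEdges]

lemma reachable_of_eqOn_exploredEdges (h : ∀ e ∈ exploredEdges ends B η, η e = η' e)
    {x u : V} (hx : x ∈ B) (hu : (openGraph ends η').Reachable x u) :
    (openGraph ends η).Reachable x u := by
  rw [SimpleGraph.reachable_iff_reflTransGen] at hu
  induction hu with
  | refl => rfl
  | @tail a b _ hab ih =>
    obtain ⟨⟨e, he, hends⟩, hne⟩ := openGraph_adj.1 hab
    have hmem : e ∈ exploredEdges ends B η := mem_exploredEdges.2 ⟨a, by simp [hends], x, hx, ih⟩
    exact ih.trans (openGraph_adj.2 ⟨⟨e, (h e hmem).trans he, hends⟩, hne⟩).reachable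

lemma isStoppingSet_exploredEdges : IsStoppingSet (exploredEdges ends B) := by
  have hsub (η η') (h : ∀ e ∈ exploredEdges ends B η, η e = η' e) :
      exploredEdges ends B η' ⊆ exploredEdges ends B η := fun e he => by
    obtain ⟨u, hu, x, hx, hxu⟩ := mem_exploredEdges.1 he
    exact mem_exploredEdges.2 ⟨u, hu, x, hx, reachable_of_eqOn_exploredEdges h hx hxu⟩
  intro η η' h
  exact (hsub η' η fun e he => (h e (hsub η η' h he)).symm).antisymm (hsub η η' h)

lemma mem_exploredEdges_supp {c : (openGraph ends η).ConnectedComponent} {e : E} :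
    e ∈ exploredEdges ends c.supp η ↔
      ∃ u ∈ ends e, (openGraph ends η).connectedComponentMk u = c := by
  refine mem_exploredEdges.trans (exists_congr fun u => and_congr_right fun _ => ⟨?_, ?_⟩)
  · rintro ⟨x, rfl, hxu⟩
    exact (SimpleGraph.ConnectedComponent.sound hxu).symm
  · rintro rfl
    exact ⟨u, rfl, .rfl⟩

lemma exploredEdges_supp_connectedComponentMk (u : V) :
    exploredEdges ends ((openGraph ends η).connectedComponentMk u).supp η =
      exploredEdges ends {u} η := by
  ext e
  rw [mem_exploredEdges_supp, mem_exploredEdges]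
  simp only [Set.mem_singleton_iff, exists_eq_left, SimpleGraph.ConnectedComponent.eq,
    SimpleGraph.reachable_comm (u := u)]

open Classical in
/-- The edges joining two distinct open clusters that both meet `B`. -/
noncomputable def crossingEdges (ends : E → Sym2 V) (B : Finset V) (η : E → Bool) : Finset E :=
  {e | ∃ c ∈ clustersMeeting ends B η, ∃ c' ∈ clustersMeeting ends B η,
    e ∈ exploredEdges ends c.supp η ∧ e ∈ exploredEdges ends c'.supp η ∧ c ≠ c'}

variable {B : Finset V} {e : E}

lemma mem_crossingEdges : e ∈ crossingEdges ends B η ↔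
    ∃ c ∈ clustersMeeting ends B η, ∃ c' ∈ clustersMeeting ends B η,
      e ∈ exploredEdges ends c.supp η ∧ e ∈ exploredEdges ends c'.supp η ∧ c ≠ c' := by
  simp [crossingEdges]

lemma mem_exploredEdges_iff_exists_clustersMeeting : e ∈ exploredEdges ends B η ↔
    ∃ c ∈ clustersMeeting ends B η, e ∈ exploredEdges ends c.supp η := by
  simp only [mem_clustersMeeting, mem_exploredEdges_supp]
  refine mem_exploredEdges.trans ⟨?_, ?_⟩
  · rintro ⟨u, hu, x, hx, hxu⟩
    exact ⟨_, ⟨x, hx, rfl⟩, u, hu, (SimpleGraph.ConnectedComponent.sound hxu).symm⟩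
  · rintro ⟨_, ⟨x, hx, rfl⟩, u, hu, hux⟩
    exact ⟨u, hu, x, hx, (SimpleGraph.ConnectedComponent.exact hux).symm⟩

lemma mem_crossingEdges_of_not_reachable {u v x y : V} (he : ends e = s(u, v)) (hx : x ∈ B)
    (hy : y ∈ B) (hxu : (openGraph ends η).Reachable x u) (hyv : (openGraph ends η).Reachable y v)
    (huv : ¬ (openGraph ends η).Reachable u v) : e ∈ crossingEdges ends B η :=
  mem_crossingEdges.2
    ⟨_, mem_clustersMeeting.2 ⟨x, hx, SimpleGraph.ConnectedComponent.sound hxu⟩,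
      _, mem_clustersMeeting.2 ⟨y, hy, SimpleGraph.ConnectedComponent.sound hyv⟩,
      mem_exploredEdges_supp.2 ⟨u, by simp [he], rfl⟩,
      mem_exploredEdges_supp.2 ⟨v, by simp [he], rfl⟩,
      fun h => huv (SimpleGraph.ConnectedComponent.exact h)⟩

lemma eq_false_of_mem_crossingEdges (he : e ∈ crossingEdges ends B η) : η e = false := by
  obtain ⟨c, -, c', -, hc, hc', hne⟩ := mem_crossingEdges.1 he
  obtain ⟨u, hu, rfl⟩ := mem_exploredEdges_supp.1 hc
  obtain ⟨v, hv, rfl⟩ := mem_exploredEdges_supp.1 hc'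
  have huv : u ≠ v := fun h => hne (congrArg _ h)
  have hends : ends e = s(u, v) := (Sym2.mem_and_mem_iff huv).1 ⟨hu, hv⟩
  by_contra hopen
  exact hne (SimpleGraph.ConnectedComponent.sound
    (openGraph_adj.2 ⟨⟨e, by simpa using hopen, hends⟩, huv⟩).reachable)

lemma card_toFinset_sym2_le_two [DecidableEq V] (z : Sym2 V) : z.toFinset.card ≤ 2 := by
  rw [Sym2.card_toFinset]
  split_ifs <;> simp

open Classical in
lemma filter_clustersMeeting_subset [DecidableEq V] (B : Finset V) (η : E → Bool) (e : E) :
    {c ∈ clustersMeeting ends B η | e ∈ exploredEdges ends c.supp η} ⊆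
      (ends e).toFinset.image (openGraph ends η).connectedComponentMk := by
  intro c hc
  simpa [mem_exploredEdges_supp] using (Finset.mem_filter.1 hc).2

open Classical in
lemma card_filter_clustersMeeting (B : Finset V) (η : E → Bool) (e : E) :
    Finset.card {c ∈ clustersMeeting ends B η | e ∈ exploredEdges ends c.supp η} =
      (if e ∈ exploredEdges ends B η then 1 else 0) +
        if e ∈ crossingEdges ends B η then 1 else 0 := by
  set S : Finset _ := {c ∈ clustersMeeting ends B η | e ∈ exploredEdges ends c.supp η} with hS
  have hle : S.card ≤ 2 :=
    calc S.card ≤ _ := Finset.card_le_card (filter_clustersMeeting_subset B η e)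
      _ ≤ (ends e).toFinset.card := Finset.card_image_le
      _ ≤ 2 := card_toFinset_sym2_le_two _
  have hexplored : e ∈ exploredEdges ends B η ↔ 0 < S.card := by
    simp only [mem_exploredEdges_iff_exists_clustersMeeting, Finset.card_pos, Finset.Nonempty,
      hS, Finset.mem_filter]
  have hcrossing : e ∈ crossingEdges ends B η ↔ 1 < S.card := by
    simp only [mem_crossingEdges, Finset.one_lt_card, hS, Finset.mem_filter]
    grind
  simp only [hexplored, hcrossing]
  split_ifs <;> omega

lemma sum_clustersMeeting_sum_exploredEdges (B : Finset V) (η : E → Bool) (f : E → ℝ) :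
    ∑ c ∈ clustersMeeting ends B η, ∑ e ∈ exploredEdges ends c.supp η, f e =
      ∑ e ∈ exploredEdges ends B η, f e + ∑ e ∈ crossingEdges ends B η, f e := by
  classical
  calc ∑ c ∈ clustersMeeting ends B η, ∑ e ∈ exploredEdges ends c.supp η, f e
      = ∑ e, ∑ c ∈ clustersMeeting ends B η with e ∈ exploredEdges ends c.supp η, f e :=
        Finset.sum_comm' (by simp [and_comm])
    _ = ∑ e, ((if e ∈ exploredEdges ends B η then f e else 0) +
          if e ∈ crossingEdges ends B η then f e else 0) := by
        refine Finset.sum_congr rfl fun e _ => ?_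
        rw [Finset.sum_const, card_filter_clustersMeeting]
        split_ifs <;> simp [two_mul]
    _ = _ := by simp [Finset.sum_add_distrib]

lemma sum_clustersMeeting_sum_exploredEdges_le [DecidableEq V] (B : Finset V) (η : E → Bool)
    {F : Finset E → ℝ} (hF : ∀ S, 0 ≤ F S) :
    ∑ c ∈ clustersMeeting ends B η, ∑ _e ∈ exploredEdges ends c.supp η,
        F (exploredEdges ends c.supp η) ≤
      ∑ e, ∑ u ∈ (ends e).toFinset, F (exploredEdges ends {u} η) := by
  classical
  calc _ = ∑ e, ∑ c ∈ clustersMeeting ends B η with e ∈ exploredEdges ends c.supp η,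
        F (exploredEdges ends c.supp η) := Finset.sum_comm' (by simp [and_comm])
    _ ≤ ∑ e, ∑ c ∈ (ends e).toFinset.image (openGraph ends η).connectedComponentMk,
          F (exploredEdges ends c.supp η) :=
        Finset.sum_le_sum fun e _ => Finset.sum_le_sum_of_subset_of_nonneg
          (filter_clustersMeeting_subset B η e) fun _ _ _ => hF _
    _ ≤ ∑ e, ∑ u ∈ (ends e).toFinset, F (exploredEdges ends {u} η) := by
        refine Finset.sum_le_sum fun e _ => ?_
        simp only [← exploredEdges_supp_connectedComponentMk]
        exact Finset.sum_image_le_of_nonneg fun _ _ => hF _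

end OpenGraph

section Deviation

/-- The open-edge indicator minus its mean under the Bernoulli measure of parameter `p`. -/
noncomputable def centredBit (p : ℝ) (b : Bool) : ℝ := (if b then 1 else 0) - p

lemma neg_one_le_centredBit (p : unitInterval) (b : Bool) : -1 ≤ centredBit p b := by
  have := p.2.2
  cases b <;> simp only [centredBit, Bool.false_eq_true, if_true, if_false] <;> linarith

lemma integral_ite_bernoulliMeasure (p : unitInterval) :
    ∫ b, (if b then (1 : ℝ) else 0) ∂bernoulliMeasure true false p = p := by
  simp [integral_bernoulliMeasure]

lemma integral_centredBit (p : unitInterval) :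
    ∫ b, centredBit p b ∂bernoulliMeasure true false p = 0 := by
  simp only [centredBit]
  rw [integral_sub .of_finite .of_finite, integral_ite_bernoulliMeasure]
  simp

lemma hasSubgaussianMGF_centredBit (p : unitInterval) :
    HasSubgaussianMGF (centredBit p) (1 / 4) (bernoulliMeasure true false p) := by
  have h := hasSubgaussianMGF_of_mem_Icc (μ := bernoulliMeasure true false p) (a := 0) (b := 1)
    (X := fun b : Bool => if b then (1 : ℝ) else 0) Measurable.of_discrete.aemeasurable
    (.of_forall fun b => by cases b <;> simp)
  rw [integral_ite_bernoulliMeasure] at h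
  have hvar : (‖(1 : ℝ) - 0‖₊ / 2) ^ 2 = 1 / 4 := by norm_num
  rwa [hvar] at h

-- For the sub-Gaussian parameter `1 / 4` of a centred bit, the tilt `-4ε` is optimal in the
-- Chernoff bound for a deviation by `ε` per edge, and yields the rate `2ε²`.
lemma neg_sum_le_add_card_mul {E : Type*} {S : Finset E} {ξ : E → ℝ} (hξ : ∀ e ∈ S, -1 ≤ ξ e)
    {ε : ℝ} (hε : 0 ≤ ε) (m : ℕ) :
    -∑ e ∈ S, ξ e ≤ m + S.card * (ε + Real.exp (-(2 * ε ^ 2 * m)) *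
      ∏ e ∈ S, Real.exp (-(4 * ε) * ξ e - 2 * ε ^ 2)) := by
  have htriv : -∑ e ∈ S, ξ e ≤ S.card := by
    simpa using Finset.sum_le_sum fun e he => neg_le.1 (hξ e he)
  rw [← Real.exp_sum, ← Real.exp_add, Finset.sum_sub_distrib, ← Finset.mul_sum]
  set L := ∑ e ∈ S, ξ e
  set W := Real.exp (-(2 * ε ^ 2 * m) + (-(4 * ε) * L - ∑ _e ∈ S, 2 * ε ^ 2)) with hW
  have hW_nonneg : 0 ≤ W := (Real.exp_pos _).le
  have hS_nonneg : (0 : ℝ) ≤ S.card := by positivity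
  rw [mul_add]
  rcases le_or_gt (-L) (S.card * ε) with hL | hL
  · have : (0 : ℝ) ≤ m + S.card * W := by positivity
    linarith
  rcases le_or_gt (S.card : ℝ) m with hm | hm
  · have : 0 ≤ S.card * ε + S.card * W := by positivity
    linarith
  have hW_one : 1 ≤ W := by
    rw [hW, Real.one_le_exp_iff, Finset.sum_const, nsmul_eq_mul]
    nlinarith [mul_le_mul_of_nonneg_left hL.le hε, mul_le_mul_of_nonneg_left hm.le (sq_nonneg ε)]
  have : (0 : ℝ) ≤ m + S.card * ε := by positivity
  nlinarith [mul_le_mul_of_nonneg_left hW_one hS_nonneg]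

end Deviation

section FiniteEstimate

variable {V E : Type*} [Fintype E] {p : unitInterval}

lemma mul_card_crossingEdges_le (ends : E → Sym2 V) (B : Finset V) (η : E → Bool) {ε : ℝ}
    (hε : 0 ≤ ε) (m : ℕ) [DecidableEq V] :
    p * ((crossingEdges ends B η).card : ℝ) ≤
      ∑ e ∈ exploredEdges ends B η, centredBit p (η e) + m * B.card +
        ∑ e, ∑ u ∈ (ends e).toFinset, (ε + Real.exp (-(2 * ε ^ 2 * m)) *
          ∏ e ∈ exploredEdges ends {u} η,
            Real.exp (-(4 * ε) * centredBit p (η e) - 2 * ε ^ 2)) := by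
  set F : Finset E → ℝ := fun S => ε + Real.exp (-(2 * ε ^ 2 * m)) *
    ∏ e ∈ S, Real.exp (-(4 * ε) * centredBit p (η e) - 2 * ε ^ 2)
  have hF (S) : 0 ≤ F S := by positivity
  have hcross : ∑ e ∈ crossingEdges ends B η, centredBit p (η e) =
      -(p * ((crossingEdges ends B η).card : ℝ)) := by
    rw [Finset.sum_congr rfl fun e he => by rw [eq_false_of_mem_crossingEdges he]]
    simp [centredBit, mul_comm]
  have hcard : ((clustersMeeting ends B η).card : ℝ) ≤ B.card := by
    classical exact_mod_cast Finset.card_image_le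
  have hclusters : ∑ c ∈ clustersMeeting ends B η,
        -∑ e ∈ exploredEdges ends c.supp η, centredBit p (η e) ≤
      m * B.card + ∑ e, ∑ u ∈ (ends e).toFinset, F (exploredEdges ends {u} η) :=
    calc _ ≤ ∑ c ∈ clustersMeeting ends B η, (m + ∑ _e ∈ exploredEdges ends c.supp η,
            F (exploredEdges ends c.supp η)) := Finset.sum_le_sum fun c _ => by
          rw [Finset.sum_const, nsmul_eq_mul]
          exact neg_sum_le_add_card_mul (fun e _ => neg_one_le_centredBit p (η e)) hε m
      _ ≤ _ := by
          rw [Finset.sum_add_distrib, Finset.sum_const, nsmul_eq_mul, mul_comm]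
          gcongr
          exact sum_clustersMeeting_sum_exploredEdges_le B η hF
  have hsum := sum_clustersMeeting_sum_exploredEdges (ends := ends) B η fun e => centredBit p (η e)
  rw [Finset.sum_neg_distrib] at hclusters
  linarith

lemma mul_integral_card_crossingEdges_le (ends : E → Sym2 V) (B : Finset V) {ε : ℝ} (hε : 0 ≤ ε)
    (m : ℕ) :
    p * ∫ η, ((crossingEdges ends B η).card : ℝ) ∂bondPercolation E p ≤
      m * B.card + 2 * Fintype.card E * (ε + Real.exp (-(2 * ε ^ 2 * m))) := by
  classical
  set W : V → (E → Bool) → ℝ := fun u η =>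
    ∏ e ∈ exploredEdges ends {u} η, Real.exp (-(4 * ε) * centredBit p (η e) - 2 * ε ^ 2)
  have hexplored : ∫ η, ∑ e ∈ exploredEdges ends B η, centredBit p (η e) ∂bondPercolation E p = 0 :=
    isStoppingSet_exploredEdges.integral_sum_eq_zero fun _ => integral_centredBit p
  have htilt (u : V) : ∫ η, W u η ∂bondPercolation E p ≤ 1 := by
    convert (isStoppingSet_exploredEdges (ends := ends) (B := {u})).integral_prod_exp_le_one
      (fun _ => hasSubgaussianMGF_centredBit p) (-(4 * ε)) using 6
    push_cast
    ring
  calc p * ∫ η, ((crossingEdges ends B η).card : ℝ) ∂bondPercolation E p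
      ≤ ∫ η, (∑ e ∈ exploredEdges ends B η, centredBit p (η e) + m * B.card +
          ∑ e, ∑ u ∈ (ends e).toFinset, (ε + Real.exp (-(2 * ε ^ 2 * m)) * W u η))
            ∂bondPercolation E p := by
        rw [← integral_const_mul]
        exact integral_mono .of_finite .of_finite fun η => mul_card_crossingEdges_le ends B η hε m
    _ = m * B.card + ∑ e, ∑ u ∈ (ends e).toFinset,
          (ε + Real.exp (-(2 * ε ^ 2 * m)) * ∫ η, W u η ∂bondPercolation E p) := by
        rw [integral_add .of_finite .of_finite, integral_add .of_finite .of_finite, hexplored,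
          integral_finsetSum _ fun _ _ => .of_finite]
        simp only [integral_finsetSum _ fun _ _ => Integrable.of_finite, integral_add .of_finite
          .of_finite, integral_const_mul, integral_const, probReal_univ, one_smul, zero_add]
    _ ≤ m * B.card + ∑ e : E, ∑ _u ∈ (ends e).toFinset, (ε + Real.exp (-(2 * ε ^ 2 * m))) := by
        gcongr with e _ u _
        exact mul_le_of_le_one_right (Real.exp_pos _).le (htilt u)
    _ ≤ m * B.card + 2 * Fintype.card E * (ε + Real.exp (-(2 * ε ^ 2 * m))) := by
        have hcard (e : E) : ((ends e).toFinset.card : ℝ) ≤ 2 := by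
          exact_mod_cast card_toFinset_sym2_le_two _
        gcongr
        simp only [Finset.sum_const, nsmul_eq_mul, ← Finset.sum_mul]
        gcongr
        simpa [mul_comm] using Finset.sum_le_card_nsmul Finset.univ _ 2 fun e _ => hcard e

end FiniteEstimate

section InfiniteComponents

variable {V : Type*} {G H K : SimpleGraph V} {u v x y : V}

lemma mem_supp_connectedComponentMk : y ∈ (G.connectedComponentMk x).supp ↔ G.Reachable x y := by
  rw [SimpleGraph.ConnectedComponent.mem_supp_iff, SimpleGraph.ConnectedComponent.eq,
    SimpleGraph.reachable_comm]

lemma reachable_or_of_reachable_sup_edge (h : (G ⊔ SimpleGraph.edge u v).Reachable x y) :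
    G.Reachable x y ∨ G.Reachable u y ∨ G.Reachable v y := by
  rw [SimpleGraph.reachable_iff_reflTransGen] at h
  induction h with
  | refl => exact .inl .rfl
  | tail _ hbc ih =>
    rcases hbc with hbc | hbc
    · exact ih.imp (·.trans hbc.reachable) (.imp (·.trans hbc.reachable) (·.trans hbc.reachable))
    · rw [SimpleGraph.edge_adj] at hbc
      rcases hbc.1 with ⟨-, rfl⟩ | ⟨-, rfl⟩
      exacts [.inr (.inr .rfl), .inr (.inl .rfl)]

lemma exists_infinite_supp_of_le_sup_edge (h : H ≤ G ⊔ SimpleGraph.edge u v)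
    (hx : (H.connectedComponentMk x).supp.Infinite) :
    ∃ y, (G.connectedComponentMk y).supp.Infinite := by
  by_contra! hfin
  refine hx (((hfin x).union ((hfin u).union (hfin v))).subset fun y hy => ?_)
  rw [mem_supp_connectedComponentMk] at hy
  simpa only [Set.mem_union, mem_supp_connectedComponentMk] using
    reachable_or_of_reachable_sup_edge (hy.mono h)

lemma infinite_supp_of_reachable (h : G.Reachable x y)
    (hx : (G.connectedComponentMk x).supp.Infinite) :
    (G.connectedComponentMk y).supp.Infinite := by
  rwa [← SimpleGraph.ConnectedComponent.sound h]

lemma infinite_supp_iso_iff {W : Type*} {G' : SimpleGraph W} (φ : G ≃g G') :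
    (G'.connectedComponentMk (φ x)).supp.Infinite ↔ (G.connectedComponentMk x).supp.Infinite := by
  simp only [← Set.infinite_coe_iff]
  exact (SimpleGraph.ConnectedComponent.isoEquivSupp φ (G.connectedComponentMk x)).infinite_iff.symm

-- If the neighbour `u` of `x` on the way to `y` lies in a finite component, open the edge `xu`.
lemma reachable_of_infinite_supp {P : SimpleGraph V → Prop}
    (hP_sup : ∀ G u v, P G → K.Adj u v → P (G ⊔ SimpleGraph.edge u v))
    (hP_adj : ∀ G u v, P G → K.Adj u v → (G.connectedComponentMk u).supp.Infinite →
      (G.connectedComponentMk v).supp.Infinite → G.Reachable u v)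
    (hxy : K.Reachable x y) (hG : P G) (hx : (G.connectedComponentMk x).supp.Infinite)
    (hy : (G.connectedComponentMk y).supp.Infinite) : G.Reachable x y := by
  rw [SimpleGraph.reachable_iff_reflTransGen] at hxy
  induction hxy using Relation.ReflTransGen.head_induction_on generalizing G with
  | refl => rfl
  | @head x u hxu _ ih =>
    by_cases hu : (G.connectedComponentMk u).supp.Infinite
    · exact (hP_adj G x u hG hxu hx hu).trans (ih hG hu hy)
    have hmono : G ≤ G ⊔ SimpleGraph.edge x u := le_sup_left
    have hinf {z} (hz : (G.connectedComponentMk z).supp.Infinite) :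
        ((G ⊔ SimpleGraph.edge x u).connectedComponentMk z).supp.Infinite :=
      hz.mono fun w hw => by
        rw [mem_supp_connectedComponentMk] at hw ⊢
        exact hw.mono hmono
    have hedge : (G ⊔ SimpleGraph.edge x u).Adj x u := .inr (by simp [SimpleGraph.edge_adj, hxu.ne])
    have huy := ih (hP_sup G x u hG hxu) (infinite_supp_of_reachable hedge.reachable (hinf hx))
      (hinf hy)
    have hnot : ¬ G.Reachable u y := fun h => hu (infinite_supp_of_reachable h.symm hy)
    have := reachable_or_of_reachable_sup_edge huy
    tauto

lemma exists_reachable_adj_notMem_of_infinite_supp {Λ : Set V} (hΛ : Λ.Finite)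
    (hH : ∀ ⦃x y⦄, x ∈ Λ → y ∈ Λ → G.Adj x y → H.Adj x y) (hx : x ∈ Λ)
    (hinf : (G.connectedComponentMk x).supp.Infinite) :
    ∃ y ∈ Λ, H.Reachable x y ∧ ∃ z ∉ Λ, G.Adj y z := by
  by_contra! hcon
  refine hinf (hΛ.subset fun y hy => ?_)
  rw [mem_supp_connectedComponentMk, SimpleGraph.reachable_iff_reflTransGen] at hy
  suffices y ∈ Λ ∧ H.Reachable x y from this.1
  induction hy with
  | refl => exact ⟨hx, .rfl⟩
  | @tail a b _ hab ih =>
    have hb : b ∈ Λ := by_contra fun hb => hcon a ih.1 ih.2 b hb hab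
    exact ⟨hb, ih.2.trans (hH ih.1 hb hab).reachable⟩

end InfiniteComponents

section Measurability

variable {V E : Type*} {ends : E → Sym2 V}

lemma reachable_openGraph_iff_exists_finset {η : E → Bool} {x y : V} :
    (openGraph ends η).Reachable x y ↔ ∃ s : Finset E, (∀ e ∈ s, η e = true) ∧
      (SimpleGraph.fromEdgeSet (ends '' s)).Reachable x y := by
  classical
  constructor
  · intro h
    rw [SimpleGraph.reachable_iff_reflTransGen] at h
    induction h with
    | refl => exact ⟨∅, by simp, .rfl⟩
    | @tail a b _ hab ih =>
      obtain ⟨s, hs, hxa⟩ := ih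
      obtain ⟨⟨e, he, hends⟩, hne⟩ := openGraph_adj.1 hab
      refine ⟨insert e s, by simpa [he] using hs,
        (hxa.mono ?_).trans (SimpleGraph.Adj.reachable ?_)⟩
      · exact SimpleGraph.fromEdgeSet_mono (Set.image_mono (by simp))
      · exact (SimpleGraph.fromEdgeSet_adj _).2 ⟨⟨e, by simp, hends⟩, hne⟩
  · rintro ⟨s, hs, h⟩
    exact h.mono (SimpleGraph.fromEdgeSet_mono (Set.image_mono hs))

/-- The event that `x` and `y` belong to two distinct infinite open clusters. -/
def distinctInfiniteClusters (ends : E → Sym2 V) (x y : V) : Set (E → Bool) :=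
  {η | ((openGraph ends η).connectedComponentMk x).supp.Infinite ∧
    ((openGraph ends η).connectedComponentMk y).supp.Infinite ∧
    ¬ (openGraph ends η).Reachable x y}

variable [Countable E]

lemma measurableSet_reachable_openGraph (x y : V) :
    MeasurableSet {η : E → Bool | (openGraph ends η).Reachable x y} := by
  simp only [reachable_openGraph_iff_exists_finset]
  refine measurableSet_setOfPred.2 (.exists fun s => ?_)
  refine .and (measurableSet_setOfPred.1 ?_) measurable_const
  simp only [Set.ofPred_forall]
  exact s.measurableSet_biInter fun e _ =>
    measurableSet_eq_fun (measurable_pi_apply e) measurable_const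

lemma measurableSet_infinite_supp_openGraph [Countable V] (x : V) :
    MeasurableSet {η : E → Bool | ((openGraph ends η).connectedComponentMk x).supp.Infinite} := by
  have hsupp : Measurable fun η : E → Bool => ((openGraph ends η).connectedComponentMk x).supp :=
    measurable_set_iff.2 fun y => by
      simp only [mem_supp_connectedComponentMk]
      exact measurableSet_setOfPred.1 (measurableSet_reachable_openGraph x y)
  simp only [← Set.encard_eq_top_iff]
  exact measurableSet_eq_fun (measurable_encard.comp hsupp) measurable_const

lemma measurableSet_distinctInfiniteClusters [Countable V] (x y : V) :
    MeasurableSet (distinctInfiniteClusters ends x y) :=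
  (measurableSet_infinite_supp_openGraph x).inter
    ((measurableSet_infinite_supp_openGraph y).inter (measurableSet_reachable_openGraph x y).compl)

end Measurability

section Lattice

variable {d : ℕ} {x y z : Vertex d} {ω : Config d}

lemma adj_comm : adj x y ↔ adj y x := by
  have hsymm (i : Fin d) : (x i - y i).natAbs = (y i - x i).natAbs := by
    rw [← Int.natAbs_neg, neg_sub]
  simp only [adj, hsymm]

lemma adj_add_right (z : Vertex d) : adj (x + z) (y + z) ↔ adj x y := by
  simp [adj]

lemma ne_of_adj (h : adj x y) : x ≠ y := by
  rintro rfl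
  simp [adj] at h

lemma abs_sub_le_one_of_adj (h : adj x y) (i : Fin d) : |x i - y i| ≤ 1 := by
  have hi := Finset.single_le_sum (f := fun i => (x i - y i).natAbs) (fun _ _ => Nat.zero_le _)
    (Finset.mem_univ i)
  rw [Int.abs_eq_natAbs]
  exact_mod_cast hi.trans h.le

lemma adj_add_single (x : Vertex d) (i : Fin d) : adj x (x + Pi.single i 1) := by
  simp [adj, Pi.single_apply, Finset.sum_ite_eq', apply_ite Int.natAbs]

/-- The nearest-neighbour graph on `ℤ^d`. -/
def lattice (d : ℕ) : SimpleGraph (Vertex d) where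
  Adj := adj
  symm := ⟨fun _ _ => adj_comm.1⟩
  loopless := ⟨fun _ h => ne_of_adj h rfl⟩

lemma lattice_preconnected : (lattice d).Preconnected := by
  let S : AddSubgroup (Vertex d) :=
    { carrier := {z | ∀ x, (lattice d).Reachable x (x + z)}
      zero_mem' := fun x => by simp
      add_mem' := fun {z w} hz hw x => by simpa [add_assoc] using (hz x).trans (hw (x + z))
      neg_mem' := fun {z} hz x => by simpa [sub_eq_add_neg] using (hz (x - z)).symm }
  have hsingle (i : Fin d) : (Pi.single i 1 : Vertex d) ∈ S := fun x =>
    SimpleGraph.Adj.reachable (adj_add_single x i)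
  intro x y
  have hmem : y - x ∈ S := by
    rw [← Finset.univ_sum_single (y - x)]
    refine S.sum_mem fun i _ => ?_
    simpa [← Pi.single_smul] using S.zsmul_mem (hsingle i) ((y - x) i)
  simpa using hmem x

lemma isEdge_mk : IsEdge s(x, y) ↔ adj x y := by
  refine ⟨fun ⟨u, v, huv, h⟩ => ?_, fun h => ⟨x, y, h, rfl⟩⟩
  rcases Sym2.eq_iff.1 h with ⟨rfl, rfl⟩ | ⟨rfl, rfl⟩
  exacts [huv, adj_comm.1 huv]

lemma openGraph_val_adj : (openGraph Subtype.val ω).Adj x y ↔ step ω x y := by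
  rw [openGraph_adj]
  constructor
  · rintro ⟨⟨⟨_, hedge⟩, hω, rfl⟩, -⟩
    exact ⟨isEdge_mk.1 hedge, hω⟩
  · rintro ⟨h, hω⟩
    exact ⟨⟨_, hω, rfl⟩, ne_of_adj h⟩

lemma openGraph_val_reachable : (openGraph Subtype.val ω).Reachable x y ↔ Conn ω x y := by
  have hstep : (openGraph Subtype.val ω).Adj = step ω :=
    funext₂ fun _ _ => propext openGraph_val_adj
  rw [SimpleGraph.reachable_iff_reflTransGen, hstep, Conn]

lemma supp_eq_cluster (ω : Config d) (x : Vertex d) :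
    ((openGraph Subtype.val ω).connectedComponentMk x).supp = cluster ω x := by
  ext y
  exact mem_supp_connectedComponentMk.trans openGraph_val_reachable

/-- Translation of edges by `z`. -/
def translateEdge (z : Vertex d) (e : Edge d) : Edge d :=
  ⟨e.1.map (· + z), by
    obtain ⟨x, y, hxy, he⟩ := e.2
    exact ⟨x + z, y + z, (adj_add_right z).2 hxy, by rw [he, Sym2.map_mk]⟩⟩

lemma translateEdge_injective (z : Vertex d) : (translateEdge z).Injective := fun _ _ h =>
  Subtype.ext (Sym2.map.injective (add_left_injective z) (congrArg Subtype.val h))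

/-- Translation by `z` as an isomorphism between the open graphs of a translated configuration and
of the configuration itself. -/
def translateIso (z : Vertex d) (ω : Config d) :
    openGraph Subtype.val (fun e => ω (translateEdge z e)) ≃g openGraph Subtype.val ω where
  toEquiv := Equiv.addRight z
  map_rel_iff' {x y} := by
    rw [openGraph_val_adj, openGraph_val_adj]
    exact ⟨fun ⟨h, hω⟩ => ⟨(adj_add_right z).1 h, hω⟩, fun ⟨h, hω⟩ => ⟨(adj_add_right z).2 h, hω⟩⟩

lemma mem_distinctInfiniteClusters_translate (z : Vertex d) :
    (fun e => ω (translateEdge z e)) ∈ distinctInfiniteClusters Subtype.val x y ↔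
      ω ∈ distinctInfiniteClusters Subtype.val (x + z) (y + z) :=
  and_congr (infinite_supp_iso_iff (translateIso z ω)).symm <|
    and_congr (infinite_supp_iso_iff (translateIso z ω)).symm <|
      not_congr (SimpleGraph.Iso.reachable_iff (φ := translateIso z ω)).symm

instance : Countable (Edge d) :=
  haveI : Countable (Sym2 (Vertex d)) := inferInstanceAs (Countable (Quot _))
  inferInstance

lemma bondPercolation_distinctInfiniteClusters_add (p : unitInterval) (x y z : Vertex d) :
    bondPercolation (Edge d) p (distinctInfiniteClusters Subtype.val (x + z) (y + z)) =
      bondPercolation (Edge d) p (distinctInfiniteClusters Subtype.val x y) := by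
  rw [← (measurePreserving_comp_bondPercolation (translateEdge_injective z) p).measure_preimage
    (measurableSet_distinctInfiniteClusters x y).nullMeasurableSet]
  congr 1
  ext ω
  exact (mem_distinctInfiniteClusters_translate z).symm

end Lattice

section Box

variable {d n : ℕ} {x y v : Vertex d} {ω : Config d}

/-- The box `Λ_n = {−n, …, n}^d` as a finset. -/
noncomputable def boxFinset (d n : ℕ) : Finset (Vertex d) :=
  Finset.Icc (fun _ => -(n : ℤ)) fun _ => (n : ℤ)

lemma mem_boxFinset : x ∈ boxFinset d n ↔ ∀ i, |x i| ≤ n := by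
  simp [boxFinset, Pi.le_def, abs_le, forall_and]

lemma card_boxFinset (d n : ℕ) : (boxFinset d n).card = (2 * n + 1) ^ d := by
  have hside : (n + 1 + n : ℤ).toNat = 2 * n + 1 := by omega
  simp [boxFinset, Pi.card_Icc, hside]

lemma boxFinset_subset_succ : boxFinset d n ⊆ boxFinset d (n + 1) := fun x hx =>
  mem_boxFinset.2 fun i => (mem_boxFinset.1 hx i).trans (by simp)

lemma mem_boxFinset_succ_of_adj (hx : x ∈ boxFinset d n) (hxy : adj x y) :
    y ∈ boxFinset d (n + 1) := by
  refine mem_boxFinset.2 fun i => ?_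
  have hx := mem_boxFinset.1 hx i
  have hxy := abs_sub_le_one_of_adj hxy i
  push_cast
  rw [abs_le] at *
  omega

open Classical in
/-- The edges of `ℤ^d` with both endpoints in the box `Λ_n`. -/
noncomputable def boxEdges (d n : ℕ) : Finset (Edge d) := (boxFinset d n).sym2.subtype IsEdge

lemma mem_boxEdges {e : Edge d} : e ∈ boxEdges d n ↔ ∀ x ∈ e.1, x ∈ boxFinset d n := by
  simp [boxEdges, Finset.mem_sym2_iff]

lemma card_boxEdges_le (d n : ℕ) : (boxEdges d n).card ≤ 3 ^ d * (2 * n + 1) ^ d := by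
  classical
  have hsub : (boxEdges d n).image Subtype.val ⊆
      (boxFinset d 1 ×ˢ boxFinset d n).image fun z => s(z.2, z.1 + z.2) := by
    rintro _ h
    obtain ⟨⟨_, x, y, hxy, rfl⟩, he, rfl⟩ := Finset.mem_image.1 h
    refine Finset.mem_image.2 ⟨(y - x, x), Finset.mem_product.2 ⟨?_, mem_boxEdges.1 he x (by simp)⟩,
      by simp⟩
    exact mem_boxFinset.2 fun i => abs_sub_le_one_of_adj (adj_comm.1 hxy) i
  calc (boxEdges d n).card = ((boxEdges d n).image Subtype.val).card :=
        (Finset.card_image_of_injective _ Subtype.val_injective).symm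
    _ ≤ (boxFinset d 1 ×ˢ boxFinset d n).card :=
        (Finset.card_le_card hsub).trans Finset.card_image_le
    _ = 3 ^ d * (2 * n + 1) ^ d := by rw [Finset.card_product, card_boxFinset, card_boxFinset]

/-- The endpoints of the edges of the box `Λ_n`. -/
def boxEnds (d n : ℕ) (e : boxEdges d n) : Sym2 (Vertex d) := e.1.1

/-- The restriction of a configuration to the box `Λ_n`. -/
def restrictBox (n : ℕ) (ω : Config d) (e : boxEdges d n) : Bool := ω e.1

lemma measurePreserving_restrictBox (p : unitInterval) (n : ℕ) :
    MeasurePreserving (restrictBox n) (bondPercolation (Edge d) p)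
      (bondPercolation (boxEdges d n) p) :=
  measurePreserving_comp_bondPercolation Subtype.val_injective p

lemma integrable_comp_restrictBox (p : unitInterval) (n : ℕ) (g : (boxEdges d n → Bool) → ℝ) :
    Integrable (fun ω => g (restrictBox n ω)) (bondPercolation (Edge d) p) :=
  (measurePreserving_restrictBox p n).integrable_comp_of_integrable (g := g) .of_finite

lemma integral_comp_restrictBox (p : unitInterval) (n : ℕ) (g : (boxEdges d n → Bool) → ℝ) :
    ∫ ω, g (restrictBox n ω) ∂bondPercolation (Edge d) p =
      ∫ η, g η ∂bondPercolation (boxEdges d n) p :=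
  integral_comp_bondPercolation Subtype.val_injective p g

lemma openGraph_restrictBox_adj (hx : x ∈ boxFinset d n) (hy : y ∈ boxFinset d n)
    (h : (openGraph Subtype.val ω).Adj x y) :
    (openGraph (boxEnds d n) (restrictBox n ω)).Adj x y := by
  obtain ⟨⟨e, he, hends⟩, hne⟩ := openGraph_adj.1 h
  exact openGraph_adj.2 ⟨⟨⟨e, mem_boxEdges.2 (by simp [hends, hx, hy])⟩, he, hends⟩, hne⟩

lemma openGraph_restrictBox_le (ω : Config d) (n : ℕ) :
    openGraph (boxEnds d n) (restrictBox n ω) ≤ openGraph Subtype.val ω := by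
  intro x y h
  obtain ⟨⟨e, he, hends⟩, hne⟩ := openGraph_adj.1 h
  exact openGraph_adj.2 ⟨⟨e.1, he, hends⟩, hne⟩

lemma exists_reachable_boxFinset_sdiff (hx : x ∈ boxFinset d (n + 1))
    (hinf : ((openGraph Subtype.val ω).connectedComponentMk x).supp.Infinite) :
    ∃ y ∈ boxFinset d (n + 1) \ boxFinset d n,
      (openGraph (boxEnds d (n + 1)) (restrictBox (n + 1) ω)).Reachable y x := by
  obtain ⟨y, hy, hxy, z, hz, hyz⟩ := exists_reachable_adj_notMem_of_infinite_supp
    (boxFinset d (n + 1)).finite_toSet (fun _ _ => openGraph_restrictBox_adj) hx hinf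
  obtain ⟨hadj, -⟩ := openGraph_val_adj.1 hyz
  exact ⟨y, Finset.mem_sdiff.2 ⟨hy, fun hy' => hz (mem_boxFinset_succ_of_adj hy' hadj)⟩, hxy.symm⟩

lemma mem_crossingEdges_of_mem_distinctInfiniteClusters (e : boxEdges d (n + 1))
    (he : boxEnds d (n + 1) e = s(x, y)) (hω : ω ∈ distinctInfiniteClusters Subtype.val x y) :
    e ∈ crossingEdges (boxEnds d (n + 1)) (boxFinset d (n + 1) \ boxFinset d n)
      (restrictBox (n + 1) ω) := by
  have hmem := mem_boxEdges.1 e.2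
  rw [boxEnds] at he
  obtain ⟨a, ha, hax⟩ := exists_reachable_boxFinset_sdiff (hmem x (by simp [he])) hω.1
  obtain ⟨b, hb, hby⟩ := exists_reachable_boxFinset_sdiff (hmem y (by simp [he])) hω.2.1
  exact mem_crossingEdges_of_not_reachable he ha hb hax hby
    fun h => hω.2.2 (h.mono (openGraph_restrictBox_le ω _))

lemma sym2_self_add_injective (hv : adj 0 v) : (fun x : Vertex d => s(x, x + v)).Injective := by
  intro x y h
  rcases Sym2.eq_iff.1 h with ⟨h, -⟩ | ⟨hx, hy⟩
  · exact h
  · have hv0 : v + v = 0 := by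
      rw [hx] at hy
      simpa [add_assoc] using hy
    rw [← two_nsmul, nsmul_eq_zero_iff_right two_ne_zero] at hv0
    exact absurd hv0.symm (ne_of_adj hv)

open Classical in
lemma card_filter_distinctInfiniteClusters_le (hv : adj 0 v) (ω : Config d) (n : ℕ) :
    Finset.card {x ∈ boxFinset d n | ω ∈ distinctInfiniteClusters Subtype.val x (x + v)} ≤
      (crossingEdges (boxEnds d (n + 1)) (boxFinset d (n + 1) \ boxFinset d n)
        (restrictBox (n + 1) ω)).card := by
  have hadj (x : Vertex d) : adj x (x + v) := by simpa [add_comm] using (adj_add_right x).2 hv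
  rw [← Finset.card_image_of_injective _ (sym2_self_add_injective hv)]
  refine (Finset.card_le_card fun z hz => ?_).trans
    (Finset.card_image_le (f := boxEnds d (n + 1)))
  obtain ⟨x, hx, rfl⟩ := Finset.mem_image.1 hz
  obtain ⟨hx, hω⟩ := Finset.mem_filter.1 hx
  have he : (⟨s(x, x + v), isEdge_mk.2 (hadj x)⟩ : Edge d) ∈ boxEdges d (n + 1) :=
    mem_boxEdges.2 <| by
      simp [boxFinset_subset_succ hx, mem_boxFinset_succ_of_adj hx (hadj x)]
  exact Finset.mem_image.2
    ⟨⟨_, he⟩, mem_crossingEdges_of_mem_distinctInfiniteClusters ⟨_, he⟩ rfl hω, rfl⟩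

end Box

section Density

variable {d : ℕ} {v : Vertex d}

lemma card_boxFinset_mul_measureReal_le (hv : adj 0 v) (p : unitInterval) (n : ℕ) :
    (boxFinset d n).card *
        (bondPercolation (Edge d) p).real (distinctInfiniteClusters Subtype.val 0 v) ≤
      ∫ η, ((crossingEdges (boxEnds d (n + 1)) (boxFinset d (n + 1) \ boxFinset d n) η).card : ℝ)
        ∂bondPercolation (boxEdges d (n + 1)) p := by
  classical
  let D (x : Vertex d) : Set (Config d) := distinctInfiniteClusters Subtype.val x (x + v)
  have hD (x : Vertex d) : MeasurableSet (D x) := measurableSet_distinctInfiniteClusters _ _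
  have htranslate (x : Vertex d) : (bondPercolation (Edge d) p).real (D x) =
      (bondPercolation (Edge d) p).real (distinctInfiniteClusters Subtype.val 0 v) := by
    have := bondPercolation_distinctInfiniteClusters_add p 0 v x
    rw [zero_add, add_comm v x] at this
    simp only [Measure.real, D, this]
  let N (η : boxEdges d (n + 1) → Bool) : ℝ :=
    (crossingEdges (boxEnds d (n + 1)) (boxFinset d (n + 1) \ boxFinset d n) η).card
  calc (boxFinset d n).card *
        (bondPercolation (Edge d) p).real (distinctInfiniteClusters Subtype.val 0 v)
      = ∑ x ∈ boxFinset d n, ∫ ω, (D x).indicator 1 ω ∂bondPercolation (Edge d) p := by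
        simp only [integral_indicator_one (hD _), htranslate, Finset.sum_const, nsmul_eq_mul]
    _ = ∫ ω, ∑ x ∈ boxFinset d n, (D x).indicator 1 ω ∂bondPercolation (Edge d) p :=
        (integral_finsetSum _ fun x _ => (integrable_const 1).indicator (hD x)).symm
    _ ≤ ∫ ω, N (restrictBox (n + 1) ω) ∂bondPercolation (Edge d) p := by
        refine integral_mono
          (integrable_finsetSum _ fun x _ => (integrable_const 1).indicator (hD x))
          (integrable_comp_restrictBox p (n + 1) N) fun ω => ?_
        simpa [Set.indicator_apply, D, N] using card_filter_distinctInfiniteClusters_le hv ω n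
    _ = _ := integral_comp_restrictBox p (n + 1) N

lemma mul_measureReal_distinctInfiniteClusters_le (hv : adj 0 v) (p : unitInterval) {ε : ℝ}
    (hε : 0 ≤ ε) (m n : ℕ) :
    let r : ℝ := ((2 * (n + 1 : ℕ) + 1) / (2 * n + 1)) ^ d
    p * (bondPercolation (Edge d) p).real (distinctInfiniteClusters Subtype.val 0 v) ≤
      m * (r - 1) + 2 * 3 ^ d * r * (ε + Real.exp (-(2 * ε ^ 2 * m))) := by
  intro r
  set a : ℝ := (2 * n + 1) ^ d with ha
  set b : ℝ := (2 * (n + 1 : ℕ) + 1) ^ d with hb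
  have ha_pos : 0 < a := by positivity
  have hboundary : ((boxFinset d (n + 1) \ boxFinset d n).card : ℝ) = b - a := by
    rw [Finset.cast_card_sdiff boxFinset_subset_succ, card_boxFinset, card_boxFinset]
    push_cast [ha, hb]
    rfl
  have hedges : (Fintype.card (boxEdges d (n + 1)) : ℝ) ≤ 3 ^ d * b := by
    rw [Fintype.card_coe, hb]
    exact_mod_cast card_boxEdges_le d (n + 1)
  have hlower := card_boxFinset_mul_measureReal_le hv p n
  have hupper := mul_integral_card_crossingEdges_le (p := p) (boxEnds d (n + 1))
    (boxFinset d (n + 1) \ boxFinset d n) hε m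
  have hcard : ((boxFinset d n).card : ℝ) = a := by
    rw [card_boxFinset]
    push_cast
    rfl
  rw [hcard] at hlower
  rw [hboundary] at hupper
  have hr : r = b / a := div_pow _ _ _
  rw [← mul_le_mul_iff_right₀ ha_pos]
  calc a * (p * (bondPercolation (Edge d) p).real (distinctInfiniteClusters Subtype.val 0 v))
      = p * (a * (bondPercolation (Edge d) p).real (distinctInfiniteClusters Subtype.val 0 v)) := by
        ring
    _ ≤ _ := mul_le_mul_of_nonneg_left hlower p.2.1
    _ ≤ _ := hupper
    _ ≤ m * (b - a) + 2 * (3 ^ d * b) * (ε + Real.exp (-(2 * ε ^ 2 * m))) := by gcongr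
    _ = _ := by
        rw [hr]
        field_simp

lemma bondPercolation_distinctInfiniteClusters_eq_zero (hv : adj 0 v) {p : unitInterval}
    (hp : 0 < (p : ℝ)) :
    bondPercolation (Edge d) p (distinctInfiniteClusters Subtype.val 0 v) = 0 := by
  set q := (bondPercolation (Edge d) p).real (distinctInfiniteClusters Subtype.val 0 v)
  have hratio : Tendsto (fun n : ℕ => ((2 * (n + 1 : ℕ) + 1) / (2 * n + 1) : ℝ) ^ d) atTop
      (nhds 1) := by
    convert (tendsto_add_mul_div_add_mul_atTop_nhds (3 : ℝ) 1 2 two_ne_zero).pow d using 2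
    · push_cast
      ring_nf
    · norm_num
  have hvolume {ε : ℝ} (hε : 0 ≤ ε) (m : ℕ) :
      p * q ≤ 2 * 3 ^ d * (ε + Real.exp (-(2 * ε ^ 2 * m))) := by
    refine ge_of_tendsto' (x := atTop) ?_ (mul_measureReal_distinctInfiniteClusters_le hv p hε m)
    simpa using ((hratio.sub_const 1).const_mul (m : ℝ)).add
      ((hratio.const_mul (2 * 3 ^ d)).mul_const (ε + Real.exp (-(2 * ε ^ 2 * m))))
  have hthreshold {ε : ℝ} (hε : 0 < ε) : p * q ≤ 2 * 3 ^ d * ε := by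
    have hexp : Tendsto (fun m : ℕ => Real.exp (-(2 * ε ^ 2 * m))) atTop (nhds 0) :=
      Real.tendsto_exp_neg_atTop_nhds_zero.comp
        (tendsto_natCast_atTop_atTop.const_mul_atTop (by positivity))
    refine ge_of_tendsto' (x := atTop) ?_ (hvolume hε.le)
    simpa using (hexp.const_add ε).const_mul (2 * 3 ^ d)
  have hpq : p * q ≤ 0 := by
    refine le_of_forall_pos_le_add fun δ hδ => ?_
    have := hthreshold (ε := δ / (2 * 3 ^ d)) (by positivity)
    rwa [mul_div_cancel₀ _ (by positivity), ← zero_add δ] at this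
  have hq_zero : q = 0 := le_antisymm (nonpos_of_mul_nonpos_right hpq hp) measureReal_nonneg
  exact (measureReal_eq_zero_iff).1 hq_zero

end Density

section InsertionTolerance

variable {V E : Type*} {ends : E → Sym2 V} {u v : V} {e : E}

lemma openGraph_update_true [DecidableEq E] (he : ends e = s(u, v)) (η : E → Bool) :
    openGraph ends (Function.update η e true) = openGraph ends η ⊔ SimpleGraph.edge u v := by
  have hopen : {e' | Function.update η e true e' = true} = {e' | η e' = true} ∪ {e} := by
    ext e'
    by_cases h : e' = e <;> simp [h]
  rw [openGraph, hopen, Set.image_union, Set.image_singleton, he, SimpleGraph.fromEdgeSet_union]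
  rfl

lemma openGraph_le_update_sup_edge [DecidableEq E] (he : ends e = s(u, v)) (η : E → Bool)
    (b : Bool) :
    openGraph ends η ≤ openGraph ends (Function.update η e b) ⊔ SimpleGraph.edge u v := by
  rw [← openGraph_update_true he, Function.update_idem, openGraph_update_true he]
  exact le_sup_left

lemma ae_exists_infinite_supp [Countable V] [Countable E] {p : unitInterval} {x : V}
    (hx : bondPercolation E p {η | ((openGraph ends η).connectedComponentMk x).supp.Infinite} ≠ 0) :
    ∀ᵐ η ∂bondPercolation E p, ∃ x, ((openGraph ends η).connectedComponentMk x).supp.Infinite := by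
  classical
  let A : Set (E → Bool) := {η | ∃ x, ((openGraph ends η).connectedComponentMk x).supp.Infinite}
  have hA : MeasurableSet A := by
    simp only [A, Set.ofPred_exists]
    exact .iUnion fun x => measurableSet_infinite_supp_openGraph x
  have hupdate (η) (hη : η ∈ A) (e : E) (b : Bool) : Function.update η e b ∈ A := by
    obtain ⟨x, hx⟩ := hη
    obtain ⟨u, v, he⟩ : ∃ u v, ends e = s(u, v) := Sym2.exists.1 ⟨ends e, rfl⟩
    exact exists_infinite_supp_of_le_sup_edge (openGraph_le_update_sup_edge he η b) hx
  have hA_ne : bondPercolation E p A ≠ 0 := fun h =>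
    hx (measure_mono_null (Set.ofPred_subset_ofPred.2 fun η hη => ⟨x, hη⟩) h)
  exact (prob_compl_eq_zero_iff hA).2
    ((infinitePi_eq_zero_or_one_of_update_mem hA hupdate).resolve_left hA_ne)

end InsertionTolerance

section Uniqueness

variable {d : ℕ} {p : unitInterval}

lemma ae_exists_infinite_cluster {x : Vertex d}
    (hx : bondPercolation (Edge d) p {ω | (cluster ω x).Infinite} ≠ 0) :
    ∀ᵐ ω ∂bondPercolation (Edge d) p, ∃ x, (cluster ω x).Infinite := by
  simp only [← supp_eq_cluster] at hx ⊢
  exact ae_exists_infinite_supp hx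

lemma ae_notMem_distinctInfiniteClusters (hp : 0 < (p : ℝ)) {x y : Vertex d} (hxy : adj x y) :
    ∀ᵐ ω ∂bondPercolation (Edge d) p, ω ∉ distinctInfiniteClusters Subtype.val x y := by
  have hv : adj 0 (y - x) := (adj_add_right x).1 (by simpa using hxy)
  have h := bondPercolation_distinctInfiniteClusters_add p 0 (y - x) x
  rw [bondPercolation_distinctInfiniteClusters_eq_zero hv hp, zero_add, sub_add_cancel] at h
  exact measure_eq_zero_iff_ae_notMem.1 h

lemma ae_forall_piecewise_notMem_distinctInfiniteClusters (hp : 0 < (p : ℝ)) :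
    ∀ᵐ ω ∂bondPercolation (Edge d) p, ∀ (s : Finset (Edge d)) (x y : Vertex d), adj x y →
      s.piecewise (fun _ => true) ω ∉ distinctInfiniteClusters Subtype.val x y := by
  simp only [ae_all_iff]
  refine fun s x y hxy => (quasiMeasurePreserving_piecewise s _ fun _ _ => ?_).ae
    (ae_notMem_distinctInfiniteClusters hp hxy)
  rw [bernoulliMeasure_bool_singleton]
  simpa using hp

lemma ae_cluster_eq_of_infinite (hp : 0 < (p : ℝ)) :
    ∀ᵐ ω ∂bondPercolation (Edge d) p, ∀ x y, (cluster ω x).Infinite → (cluster ω y).Infinite →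
      cluster ω x = cluster ω y := by
  filter_upwards [ae_forall_piecewise_notMem_distinctInfiniteClusters hp] with ω hω x y hx hy
  rw [← supp_eq_cluster] at hx hy ⊢
  rw [← supp_eq_cluster, SimpleGraph.ConnectedComponent.sound]
  refine reachable_of_infinite_supp (K := lattice d)
    (P := fun G => ∃ s : Finset (Edge d), G = openGraph Subtype.val (s.piecewise (fun _ => true) ω))
    ?_ ?_ (lattice_preconnected x y) ⟨∅, by simp⟩ hx hy
  · rintro _ u v ⟨s, rfl⟩ huv
    let e : Edge d := ⟨s(u, v), u, v, huv, rfl⟩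
    have he : e.1 = s(u, v) := rfl
    exact ⟨insert e s, by rw [s.piecewise_insert, openGraph_update_true he]⟩
  · rintro _ u v ⟨s, rfl⟩ huv hu hv
    exact by_contra fun h => hω s u v huv ⟨hu, hv, h⟩

end Uniqueness

/-- Burton–Keane: for every `d ≥ 1` and `p ∈ (0,1)` with `θ(p) > 0`, `ℙ_p`-almost surely
there exists exactly one infinite open cluster. -/
theorem uniqueness_of_infinite_cluster
    (d : ℕ) (hd : 1 ≤ d) (p : ℝ) (hp : p ∈ Set.Ioo (0 : ℝ) 1)
    (μ : Measure (Config d)) (hμ : IsBernoulli d p μ)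
    (hθ : 0 < μ (ZeroToInfinity d)) :
    μ {ω : Config d |
        ∃! C : Set (Vertex d), (∃ x, C = cluster ω x) ∧ C.Infinite} = 1 := by
  lift p to unitInterval using Set.Ioo_subset_Icc_self hp
  obtain rfl := hμ.eq_bondPercolation
  rw [← measure_univ (μ := bondPercolation (Edge d) p)]
  refine measure_congr (Filter.eventuallyEq_univ.2 ?_)
  filter_upwards [ae_exists_infinite_cluster hθ.ne', ae_cluster_eq_of_infinite hp.1]
    with ω ⟨x, hx⟩ hunique
  refine ⟨cluster ω x, ⟨⟨x, rfl⟩, hx⟩, ?_⟩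
  rintro _ ⟨⟨y, rfl⟩, hy⟩
  exact hunique y x hy hx
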